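/- Let X be a real Banach space and let C, D ⊆ X be nonempty convex sets such that C is weakly compact (compact in the weak topology of X) and D is simultaneously approximatively weakly compact. Then C + D is simultaneously approximatively weakly compact. -/

import Mathlib

/-!
Let `y n = c n + d n` be minimizing for `A` in `C + D`. A weak cluster point `c₀ ∈ C` of `c` is, by
Mazur's theorem, the norm limit of convex combinations `c' n` of the tails of `c`. The same
combinations `d' n` of the tails of `d` make `c' n + d' n` minimizing, because `simSup A` is convex;
hence `d'` is minimizing for `A - c₀` in `D`, and it subconverges weakly to some `d₀ ∈ D`. The point
`z = c₀ + d₀` then satisfies `f z = lim f (y n)` for every functional `f` for which the limit exists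
(`exists_tail_point`).

This applies to every subsequence of `y`, and that alone yields a weakly convergent subsequence
(`exists_weakTendsto_subseq`): by a diagonal argument, pass to a subsequence along which countably
many functionals separating the points of the closed span of `y` converge. All points `z` obtained
from further subsequences agree on these functionals, so they coincide, and therefore every
functional converges to its value at that common point.
-/

open Filter Topology Pointwise

variable {X : Type*} [NormedAddCommGroup X] [NormedSpace ℝ X]

/-- `simSup A y = sup_{a ∈ A} ‖a - y‖`. -/
noncomputable def simSup (A : Set X) (y : X) : ℝ := ⨆ a : A, ‖(a : X) - y‖

/-- `simDist A C = inf_{y ∈ C} sup_{a ∈ A} ‖a - y‖`. -/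
noncomputable def simDist (A C : Set X) : ℝ := ⨅ y : C, simSup A (y : X)

/-- The set of best simultaneous approximations `P_C(A)`. -/
def simBest (A C : Set X) : Set X := {y | y ∈ C ∧ simSup A y = simDist A C}

/-- The set `P_C(A, δ)`. -/
def simBestApprox (A C : Set X) (δ : ℝ) : Set X :=
  {y | y ∈ C ∧ simSup A y < simDist A C + δ}

/-- `C` is simultaneously proximinal. -/
def SimProximinal (C : Set X) : Prop :=
  ∀ A : Set X, A.Nonempty → Bornology.IsBounded A → (simBest A C).Nonempty

/-- `y` is a minimizing sequence in `C` for `A`. -/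
def IsMinimizing (A C : Set X) (y : ℕ → X) : Prop :=
  (∀ n, y n ∈ C) ∧ Tendsto (fun n => simSup A (y n)) atTop (𝓝 (simDist A C))

/-- Weak convergence of a sequence. -/
def WeakTendsto (y : ℕ → X) (c : X) : Prop :=
  ∀ f : X →L[ℝ] ℝ, Tendsto (fun n => f (y n)) atTop (𝓝 (f c))

/-- `C` is simultaneously approximatively compact. -/
def SimApproxCompact (C : Set X) : Prop :=
  ∀ A : Set X, A.Nonempty → Bornology.IsBounded A → ∀ y : ℕ → X, IsMinimizing A C y →
    ∃ c ∈ C, ∃ φ : ℕ → ℕ, StrictMono φ ∧ Tendsto (y ∘ φ) atTop (𝓝 c)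

/-- `C` is simultaneously approximatively weakly compact. -/
def SimApproxWeakCompact (C : Set X) : Prop :=
  ∀ A : Set X, A.Nonempty → Bornology.IsBounded A → ∀ y : ℕ → X, IsMinimizing A C y →
    ∃ c ∈ C, ∃ φ : ℕ → ℕ, StrictMono φ ∧ WeakTendsto (y ∘ φ) c

/-- `C` is simultaneously strongly proximinal. -/
def SimStronglyProximinal (C : Set X) : Prop :=
  SimProximinal C ∧ ∀ A : Set X, A.Nonempty → Bornology.IsBounded A → ∀ ε > (0 : ℝ),
    ∃ δ > (0 : ℝ), simBestApprox A C δ ⊆ simBest A C + Metric.closedBall (0 : X) ε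

/-- `C` is simultaneously weakly strongly proximinal. -/
def SimWeakStronglyProximinal (C : Set X) : Prop :=
  SimProximinal C ∧ ∀ A : Set X, A.Nonempty → Bornology.IsBounded A →
    ∀ V : Set X, V ∈ 𝓝 (0 : WeakSpace ℝ X) → ∃ δ > (0 : ℝ),
      simBestApprox A C δ ⊆ simBest A C + V

/-- `z` is consistent with the sequence `y`: every continuous functional that converges along `y`
converges to its value at `z`. Any weak limit of convex combinations of the tails of `y` has this
property. -/
def IsTailPoint (y : ℕ → X) (z : X) : Prop :=
  ∀ (f : X →L[ℝ] ℝ) (α : ℝ), Tendsto (fun n => f (y n)) atTop (𝓝 α) → f z = α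

lemma bddAbove_simSup {A : Set X} (hA : Bornology.IsBounded A) (y : X) :
    BddAbove (Set.range fun a : A => ‖(a : X) - y‖) := by
  obtain ⟨M, hM⟩ := hA.exists_norm_le
  refine ⟨M + ‖y‖, ?_⟩
  rintro _ ⟨a, rfl⟩
  exact (norm_sub_le _ _).trans (by linarith [hM a a.2])

lemma norm_sub_le_simSup {A : Set X} (hA : Bornology.IsBounded A) {a : X} (ha : a ∈ A) (y : X) :
    ‖a - y‖ ≤ simSup A y :=
  le_ciSup (bddAbove_simSup hA y) (⟨a, ha⟩ : A)

lemma simSup_le_iff {A : Set X} (hne : A.Nonempty) (hA : Bornology.IsBounded A) {y : X} {r : ℝ} :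
    simSup A y ≤ r ↔ ∀ a ∈ A, ‖a - y‖ ≤ r := by
  haveI := hne.to_subtype
  exact ⟨fun h a ha => (norm_sub_le_simSup hA ha y).trans h, fun h => ciSup_le fun a => h a a.2⟩

lemma simSup_nonneg (A : Set X) (y : X) : 0 ≤ simSup A y :=
  Real.iSup_nonneg fun _ => norm_nonneg _

lemma simDist_le {A C : Set X} {y : X} (hy : y ∈ C) : simDist A C ≤ simSup A y :=
  ciInf_le (f := fun y : C => simSup A (y : X))
    ⟨0, by rintro _ ⟨z, rfl⟩; exact simSup_nonneg A z⟩ ⟨y, hy⟩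

lemma convex_simSup_le {A : Set X} (hne : A.Nonempty) (hA : Bornology.IsBounded A) (r : ℝ) :
    Convex ℝ {y | simSup A y ≤ r} := by
  have : {y | simSup A y ≤ r} = ⋂ a ∈ A, Metric.closedBall a r := by
    ext y
    simp [simSup_le_iff hne hA, dist_eq_norm, norm_sub_rev y]
  rw [this]
  exact convex_iInter₂ fun a _ => convex_closedBall a r

/-- A separable set admits a countable family of functionals separating its points from `0`: take
norming functionals of a dense sequence. -/
lemma exists_separating_seq {S : Set X} (hS : TopologicalSpace.IsSeparable S) :
    ∃ g : ℕ → X →L[ℝ] ℝ, ∀ v ∈ S, (∀ m, g m v = 0) → v = 0 := by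
  obtain ⟨c, hc, hSc⟩ := hS
  rcases c.eq_empty_or_nonempty with rfl | hne
  · refine ⟨fun _ => 0, fun v hv => ?_⟩
    simpa using hSc hv
  obtain ⟨s, rfl⟩ := hc.exists_eq_range hne
  choose g hg1 hg2 using fun m => exists_dual_vector'' ℝ (s m)
  refine ⟨g, fun v hv h0 => ?_⟩
  rw [← norm_le_zero_iff]
  refine le_of_forall_pos_le_add fun ε hε => ?_
  obtain ⟨_, ⟨m, rfl⟩, hm⟩ := Metric.mem_closure_iff.1 (hSc hv) (ε / 2) (by positivity)
  rw [dist_eq_norm] at hm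
  have h1 : ‖s m‖ ≤ ‖v - s m‖ := by
    have h2 : g m (s m - v) = ‖s m‖ := by simp [h0 m, hg2 m]
    calc ‖s m‖ = g m (s m - v) := h2.symm
      _ ≤ ‖g m (s m - v)‖ := Real.le_norm_self _
      _ ≤ 1 * ‖s m - v‖ := (g m).le_of_opNorm_le (hg1 m) _
      _ = ‖v - s m‖ := by rw [one_mul, norm_sub_rev]
  have h3 : ‖v‖ ≤ ‖v - s m‖ + ‖s m‖ := by simpa using norm_add_le (v - s m) (s m)
  linarith

lemma IsTailPoint.mem_closure_span {y : ℕ → X} {z : X} (hz : IsTailPoint y z) :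
    z ∈ (Submodule.span ℝ (Set.range y)).topologicalClosure := by
  by_contra hmem
  obtain ⟨f, u, hfu, hfz⟩ := geometric_hahn_banach_closed_point
    (Submodule.span ℝ (Set.range y)).topologicalClosure.convex
    (Submodule.isClosed_topologicalClosure _) hmem
  -- A functional bounded above on a subspace vanishes there.
  have hf0 : ∀ n, f (y n) = 0 := by
    intro n
    by_contra h
    have hy : y n ∈ (Submodule.span ℝ (Set.range y)).topologicalClosure :=
      Submodule.le_topologicalClosure _ (Submodule.subset_span ⟨n, rfl⟩)
    have := hfu _ (Submodule.smul_mem _ (u / f (y n)) hy)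
    rw [map_smul, smul_eq_mul, div_mul_cancel₀ _ h] at this
    exact lt_irrefl _ this
  have h0 : f z = 0 := hz f 0 (by simp [hf0])
  have := hfu 0 (Submodule.zero_mem _)
  rw [map_zero] at this
  linarith

/-- A bounded sequence each of whose subsequences has a tail point in `S` has a subsequence
converging weakly to an element of `S`. -/
lemma exists_weakTendsto_subseq {y : ℕ → X} {M : ℝ} (hM : ∀ n, ‖y n‖ ≤ M) {S : Set X}
    (H : ∀ φ : ℕ → ℕ, StrictMono φ → ∃ z ∈ S, IsTailPoint (y ∘ φ) z) :
    ∃ z ∈ S, ∃ φ : ℕ → ℕ, StrictMono φ ∧ WeakTendsto (y ∘ φ) z := by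
  have hsep : TopologicalSpace.IsSeparable
      ((Submodule.span ℝ (Set.range y)).topologicalClosure : Set X) := by
    rw [Submodule.topologicalClosure_coe]
    exact (Set.countable_range y).isSeparable.span.closure
  obtain ⟨g, hg⟩ := exists_separating_seq hsep
  have hbd : ∀ (f : X →L[ℝ] ℝ) n, f (y n) ∈ Metric.closedBall (0 : ℝ) (‖f‖ * M) := by
    intro f n
    rw [mem_closedBall_zero_iff]
    exact f.le_opNorm_of_le (hM n)
  have hspan : ∀ φ : ℕ → ℕ, ∀ z, IsTailPoint (y ∘ φ) z →
      z ∈ (Submodule.span ℝ (Set.range y)).topologicalClosure := fun φ z hz =>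
    Submodule.topologicalClosure_mono
      (Submodule.span_mono (Set.range_comp_subset_range φ y)) hz.mem_closure_span
  -- Tychonoff in `ℕ → ℝ` replaces the diagonal extraction.
  obtain ⟨L, -, ψ, hψ, hL⟩ :=
    (isCompact_univ_pi fun m => isCompact_closedBall (0 : ℝ) (‖g m‖ * M)).tendsto_subseq
      (x := fun n m => g m (y n)) (fun n m _ => hbd (g m) n)
  rw [tendsto_pi_nhds] at hL
  obtain ⟨z, hzS, hz⟩ := H ψ hψ
  refine ⟨z, hzS, ψ, hψ, fun f => tendsto_of_subseq_tendsto fun ns hns => ?_⟩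
  obtain ⟨ρ, hρ, hρns⟩ := strictMono_subseq_of_tendsto_atTop hns
  obtain ⟨α, -, τ, hτ, hα⟩ := (isCompact_closedBall (0 : ℝ) (‖f‖ * M)).tendsto_subseq
      (x := fun n => f (y (ψ (ns (ρ n))))) (fun n => hbd f _)
  have hsub : StrictMono fun n => ns (ρ (τ n)) := hρns.comp hτ
  obtain ⟨z', -, hz'⟩ := H (fun n => ψ (ns (ρ (τ n)))) (hψ.comp hsub)
  have hzz : z' - z = 0 := by
    refine hg _ (Submodule.sub_mem _ (hspan _ _ hz') (hspan _ _ hz)) fun m => ?_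
    rw [map_sub, hz (g m) (L m) (hL m),
      hz' (g m) (L m) ((hL m).comp hsub.tendsto_atTop), sub_self]
  refine ⟨fun n => ρ (τ n), ?_⟩
  rw [← sub_eq_zero.1 hzz, hz' f α hα]
  exact hα

/-- Mazur's theorem for sequences in a weakly compact set: some point of the set lies in the norm
closure of the convex hull of every tail. -/
lemma exists_mem_closure_convexHull_tail {C : Set X}
    (hC : IsCompact (show Set (WeakSpace ℝ X) from C)) {c : ℕ → X} (hc : ∀ n, c n ∈ C) :
    ∃ c₀ ∈ C, ∀ n, c₀ ∈ closure (convexHull ℝ (c '' Set.Ici n)) := by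
  obtain ⟨c₀, hc₀, hcl⟩ := hC.exists_mapClusterPt_of_frequently (l := atTop)
    (f := fun n => (toWeakSpace ℝ X (c n))) (Frequently.of_forall hc)
  refine ⟨c₀, hc₀, fun n => ?_⟩
  by_contra hn
  obtain ⟨f, u, hfu, hfc⟩ := geometric_hahn_banach_closed_point
    (convex_convexHull ℝ (c '' Set.Ici n)).closure isClosed_closure hn
  have hcont : Continuous fun x : WeakSpace ℝ X => f ((toWeakSpace ℝ X).symm x) :=
    WeakBilin.eval_continuous (topDualPairing ℝ X).flip f
  have hfr := (hcl.continuousAt_comp hcont.continuousAt).frequently (lt_mem_nhds hfc)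
  obtain ⟨k, hk, hkn⟩ := (hfr.and_eventually (eventually_ge_atTop n)).exists
  have hk' : u < f (c k) := hk
  exact lt_asymm hk'
    (hfu _ (subset_closure (subset_convexHull ℝ _ (Set.mem_image_of_mem c hkn))))

lemma exists_tail_point {A C D : Set X} (hne : A.Nonempty) (hA : Bornology.IsBounded A)
    (hDne : D.Nonempty) (hDc : Convex ℝ D)
    (hC : IsCompact (show Set (WeakSpace ℝ X) from C)) (hD : SimApproxWeakCompact D)
    {y : ℕ → X} (hy : IsMinimizing A (C + D) y) :
    ∃ z ∈ C + D, IsTailPoint y z := by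
  obtain ⟨hmem, hlim⟩ := hy
  choose c hc d hd hcd using fun n => Set.mem_add.1 (hmem n)
  obtain ⟨c₀, hc₀, hcl⟩ := exists_mem_closure_convexHull_tail hC hc
  -- Convex combinations are formed in `X × X`, so that `c` and `d` get the same coefficients.
  have hex : ∀ n : ℕ, ∃ p ∈ convexHull ℝ ((fun k => (c k, d k)) '' Set.Ici n),
      ‖p.1 - c₀‖ < 1 / ((n : ℝ) + 1) := by
    intro n
    obtain ⟨q, hq, hqn⟩ := Metric.mem_closure_iff.1 (hcl n) (1 / ((n : ℝ) + 1)) (by positivity)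
    have himg : c '' Set.Ici n =
        LinearMap.fst ℝ X X '' ((fun k => (c k, d k)) '' Set.Ici n) := by
      rw [Set.image_image]; rfl
    rw [himg, ← LinearMap.image_convexHull] at hq
    obtain ⟨p, hp, rfl⟩ := hq
    exact ⟨p, hp, by rw [← dist_eq_norm, dist_comm]; exact hqn⟩
  choose p hp hpc using hex
  have hpc0 : Tendsto (fun n => ‖(p n).1 - c₀‖) atTop (𝓝 0) :=
    squeeze_zero (fun _ => norm_nonneg _) (fun n => (hpc n).le)
      tendsto_one_div_add_atTop_nhds_zero_nat
  have hp1 : Tendsto (fun n => (p n).1) atTop (𝓝 c₀) :=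
    tendsto_iff_norm_sub_tendsto_zero.2 hpc0
  have htail : ∀ K : Set X, Convex ℝ K → (∀ᶠ n in atTop, y n ∈ K) →
      ∀ᶠ n in atTop, (p n).1 + (p n).2 ∈ K := by
    intro K hK hev
    obtain ⟨N, hN⟩ := eventually_atTop.1 hev
    filter_upwards [eventually_ge_atTop N] with n hn
    refine convexHull_min ?_
      (hK.linear_preimage (LinearMap.fst ℝ X X + LinearMap.snd ℝ X X)) (hp n)
    rintro _ ⟨k, hk, rfl⟩
    change c k + d k ∈ K
    rw [hcd]
    exact hN k (le_trans hn hk)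
  have hp2 : ∀ n, (p n).2 ∈ D := by
    intro n
    refine convexHull_min ?_ (hDc.linear_preimage (LinearMap.snd ℝ X X)) (hp n)
    rintro _ ⟨k, -, rfl⟩
    exact hd k
  set R := simDist A (C + D) with hR
  set A' : Set X := (fun a => a - c₀) '' A with hA'
  have hne' : A'.Nonempty := hne.image _
  have hbA' : Bornology.IsBounded A' := by
    obtain ⟨M, hM⟩ := hA.exists_norm_le
    refine isBounded_iff_forall_norm_le.2 ⟨M + ‖c₀‖, ?_⟩
    rintro _ ⟨a, ha, rfl⟩
    exact (norm_sub_le _ _).trans (by linarith [hM a ha])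
  have hRle : ∀ x ∈ D, R ≤ simSup A' x := by
    intro x hx
    refine (simDist_le (Set.add_mem_add hc₀ hx)).trans ((simSup_le_iff hne hA).2 fun a ha => ?_)
    rw [← sub_sub]
    exact norm_sub_le_simSup hbA' (Set.mem_image_of_mem _ ha) x
  have hub : ∀ n, simSup A' (p n).2 ≤ simSup A ((p n).1 + (p n).2) + ‖(p n).1 - c₀‖ := by
    intro n
    refine (simSup_le_iff hne' hbA').2 ?_
    rintro _ ⟨a, ha, rfl⟩
    calc ‖a - c₀ - (p n).2‖ = ‖(a - ((p n).1 + (p n).2)) + ((p n).1 - c₀)‖ := by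
          congr 1; abel
      _ ≤ _ := (norm_add_le _ _).trans (by gcongr; exact norm_sub_le_simSup hA ha _)
  have hlim' : Tendsto (fun n => simSup A' (p n).2) atTop (𝓝 R) := by
    rw [tendsto_order]
    refine ⟨fun r hr => Eventually.of_forall fun n => hr.trans_le (hRle _ (hp2 n)),
      fun r hr => ?_⟩
    have hmid : R < (R + r) / 2 := by linarith
    filter_upwards [htail _ (convex_simSup_le hne hA ((R + r) / 2)) (hlim.eventually_le_const hmid),
      hpc0.eventually_lt_const (show 0 < (r - R) / 2 by linarith)] with n h1 h2
    have h1' : simSup A ((p n).1 + (p n).2) ≤ (R + r) / 2 := h1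
    linarith [hub n]
  have hReq : simDist A' D = R := by
    haveI := hDne.to_subtype
    exact le_antisymm (ge_of_tendsto' hlim' fun n => simDist_le (hp2 n))
      (le_ciInf fun x => hRle x x.2)
  obtain ⟨d₀, hd₀, φ, hφ, hw⟩ := hD A' hne' hbA' (fun n => (p n).2) ⟨hp2, by rwa [hReq]⟩
  refine ⟨c₀ + d₀, Set.add_mem_add hc₀ hd₀, fun f α hα => ?_⟩
  have h1 : Tendsto (fun n => f ((p n).1 + (p n).2)) atTop (𝓝 α) := by
    rw [Metric.tendsto_nhds] at hα ⊢
    intro ε hε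
    exact htail {x | f x ∈ Metric.ball α ε}
      ((convex_ball α ε).linear_preimage f.toLinearMap) (hα ε hε)
  have h2 : Tendsto (fun n => f ((p (φ n)).1) + f ((p (φ n)).2)) atTop (𝓝 (f c₀ + f d₀)) :=
    (((f.continuous.tendsto c₀).comp hp1).comp hφ.tendsto_atTop).add (hw f)
  have h3 := h1.comp hφ.tendsto_atTop
  simp only [Function.comp_def, map_add] at h3
  rw [map_add]
  exact tendsto_nhds_unique h2 h3

/-- The sum of a weakly compact convex set and a simultaneously approximatively weakly compact
convex set is simultaneously approximatively weakly compact. -/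
theorem weaklyCompact_add_simApproxWeakCompact [CompleteSpace X]
    (C D : Set X) (hCne : C.Nonempty) (hDne : D.Nonempty)
    (hCc : Convex ℝ C) (hDc : Convex ℝ D)
    (hC : IsCompact (show Set (WeakSpace ℝ X) from C))
    (hD : SimApproxWeakCompact D) :
    SimApproxWeakCompact (C + D) := by
  intro A hne hA y hy
  obtain ⟨a, ha⟩ := hne
  obtain ⟨B, hB⟩ := hy.2.bddAbove_range
  have hM : ∀ n, ‖y n‖ ≤ ‖a‖ + B := by
    intro n
    have h1 := norm_sub_le_simSup hA ha (y n)
    have h2 : simSup A (y n) ≤ B := hB ⟨n, rfl⟩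
    have h3 : ‖y n‖ ≤ ‖a‖ + ‖a - y n‖ := by simpa using norm_sub_le a (a - y n)
    linarith
  exact exists_weakTendsto_subseq hM fun φ hφ => exists_tail_point ⟨a, ha⟩ hA hDne hDc hC hD
    ⟨fun n => hy.1 (φ n), hy.2.comp hφ.tendsto_atTop⟩
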